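/- arXiv:1409.6466 — 3 statements merged into one kernel-verified Lean document; each statement's English description precedes it below -/
import Mathlib

section
/- Let S be a finite nonempty set, P : S × S → [0,1], and I : S → [0,1]. For every n ≥ 1 and states s₀, s₁, …, s_n ∈ S, sup over all sequences σ : ℕ → S with σ i = sᵢ for 0 ≤ i ≤ n of min( I(s₀), val_P(σ) ) equals min( I(s₀), min_{0 ≤ i < n} P(sᵢ, sᵢ₊₁), r_P(s_n) ); and for n = 0, sup over all σ : ℕ → S with σ 0 = s₀ of min( I(s₀), val_P(σ) ) equals min( I(s₀), r_P(s₀) ). -/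
/-!
Deleting the first `n` terms maps the cylinder of `s₀ … s_n` onto the runs from `s_n`, and the value
of a sequence in the cylinder is the meet of the `n` prefix transitions, which are fixed by the
cylinder, with the value of its tail. The meet with this fixed part commutes with the supremum over
tails because `[0,1]` is a frame.
-/

/-- `[0,1]` as a complete lattice. -/
instance : Fact ((0:ℝ) ≤ 1) := ⟨zero_le_one⟩

/-- The value of a run `σ`: `inf_{i ≥ 0} P(σ i, σ (i+1))`. -/
noncomputable def valP {S : Type*} (P : S → S → unitInterval) (σ : ℕ → S) : unitInterval :=
  ⨅ i : ℕ, P (σ i) (σ (i + 1))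

/-- `r_P(s)`: the supremum of the values of all runs starting at `s`. -/
noncomputable def rP {S : Type*} (P : S → S → unitInterval) (s : S) : unitInterval :=
  ⨆ σ : {σ : ℕ → S // σ 0 = s}, valP P σ.1

section Cylinder

variable {S α : Type*}

/-- The value of the sequence `σ` for transition weights `P`; it is `valP` when the
weights lie in `[0,1]`. -/
def runValue [InfSet α] (P : S → S → α) (σ : ℕ → S) : α :=
  ⨅ i : ℕ, P (σ i) (σ (i + 1))

/-- The supremum of the values of the runs from `s`, for transition weights `P`; it is `rP`
when the weights lie in `[0,1]`. -/
def supRunValue [CompleteLattice α] (P : S → S → α) (s : S) : α :=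
  ⨆ σ : {σ : ℕ → S // σ 0 = s}, runValue P σ

/-- The cylinder of a finite path fragment: the infinite sequences extending it. A fragment with
`n` transitions is indexed by its `n + 1` states. -/
def cylinder {n : ℕ} (c : Fin (n + 1) → S) : Set (ℕ → S) :=
  {σ | ∀ i : Fin (n + 1), σ i.val = c i}

theorem iInf_eq_iInf_fin_inf_iInf_nat_add [CompleteLattice α] (u : ℕ → α) (n : ℕ) :
    ⨅ i, u i = (⨅ i : Fin n, u i) ⊓ ⨅ i, u (i + n) := by
  have iInf_lt : ⨅ i < n, u i = ⨅ i : Fin n, u i :=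
    iInf_subtype'.trans (Fin.equivSubtype.iInf_comp (g := fun i : {i // i < n} => u i)).symm
  simp only [iInf_split u (· < n), not_lt, iInf_lt, ← iInf_ge_eq_iInf_nat_add, ge_iff_le]

theorem runValue_eq_inf_runValue_tail [CompleteLattice α] (P : S → S → α) {n : ℕ}
    {c : Fin (n + 1) → S} {σ : ℕ → S} (hσ : σ ∈ cylinder c) :
    runValue P σ =
      (⨅ i : Fin n, P (c i.castSucc) (c i.succ)) ⊓ runValue P (fun k => σ (k + n)) := by
  have prefix_eq (i : Fin n) : P (σ i) (σ (i + 1)) = P (c i.castSucc) (c i.succ) :=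
    congrArg₂ P (hσ i.castSucc) (hσ i.succ)
  rw [runValue, iInf_eq_iInf_fin_inf_iInf_nat_add _ n]
  simp only [prefix_eq, runValue, Nat.add_right_comm]

theorem exists_mem_cylinder_tail_eq {n : ℕ} {c : Fin (n + 1) → S} {τ : ℕ → S}
    (hτ : τ 0 = c (Fin.last n)) : ∃ σ ∈ cylinder c, (fun k => σ (k + n)) = τ := by
  refine ⟨fun k => if hk : k < n then c (Fin.castSucc ⟨k, hk⟩) else τ (k - n), fun i => ?_, ?_⟩
  · cases i using Fin.lastCases with
    | last => simpa using hτ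
    | cast i => simp
  · simp

theorem iSup_cylinder_tail [SupSet α] (f : (ℕ → S) → α) {n : ℕ} (c : Fin (n + 1) → S) :
    ⨆ σ : cylinder c, f (fun k => σ.1 (k + n)) =
      ⨆ τ : {τ : ℕ → S // τ 0 = c (Fin.last n)}, f τ := by
  let tail (σ : cylinder c) : {τ : ℕ → S // τ 0 = c (Fin.last n)} :=
    ⟨fun k => σ.1 (k + n), by simpa using σ.2 (Fin.last n)⟩
  have tail_surjective : Function.Surjective tail := fun ⟨τ, hτ⟩ =>
    have ⟨σ, hσ, hστ⟩ := exists_mem_cylinder_tail_eq hτ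
    ⟨⟨σ, hσ⟩, Subtype.ext hστ⟩
  exact tail_surjective.iSup_comp fun τ => f τ

end Cylinder

theorem possibility_of_cylinder_general {S α : Type*} [Order.Frame α]
    (P : S → S → α) (I : S → α) {n : ℕ} (c : Fin (n + 1) → S) :
    ⨆ σ : cylinder c, I (c 0) ⊓ runValue P σ =
      I (c 0) ⊓ ((⨅ i : Fin n, P (c i.castSucc) (c i.succ)) ⊓ supRunValue P (c (Fin.last n))) := by
  let p := ⨅ i : Fin n, P (c i.castSucc) (c i.succ)
  calc ⨆ σ : cylinder c, I (c 0) ⊓ runValue P σ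
    _ = I (c 0) ⊓ ⨆ σ : cylinder c, runValue P σ := (inf_iSup_eq _ _).symm
    _ = I (c 0) ⊓ ⨆ σ : cylinder c, p ⊓ runValue P (fun k => σ.1 (k + n)) := by
      simp only [p, fun σ : cylinder c => runValue_eq_inf_runValue_tail P σ.2]
    _ = I (c 0) ⊓ (p ⊓ ⨆ σ : cylinder c, runValue P (fun k => σ.1 (k + n))) := by
      rw [inf_iSup_eq p]
    _ = I (c 0) ⊓ (p ⊓ supRunValue P (c (Fin.last n))) := by
      rw [iSup_cylinder_tail, supRunValue]

/-- Possibility of cylinder sets: for `n ≥ 1` and states `s₀, …, s_n`, the sup over all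
infinite sequences extending `s₀ … s_n` of `min(I(s₀), val_P(σ))` equals
`min(I(s₀), min_{0≤i<n} P(sᵢ, sᵢ₊₁), r_P(s_n))`; and for `n = 0` it equals
`min(I(s₀), r_P(s₀))`. -/
theorem possibility_of_cylinder {S : Type*} [Fintype S] [Nonempty S]
    (P : S → S → unitInterval) (I : S → unitInterval) :
    (∀ n : ℕ, 1 ≤ n → ∀ c : Fin (n + 1) → S,
      (⨆ σ : {σ : ℕ → S // ∀ i : Fin (n + 1), σ i.val = c i},
          min (I (c 0)) (valP P σ.1))
        = min (I (c 0))
            (min (⨅ i : Fin n, P (c i.castSucc) (c i.succ)) (rP P (c (Fin.last n)))))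
    ∧ (∀ s₀ : S,
      (⨆ σ : {σ : ℕ → S // σ 0 = s₀}, min (I s₀) (valP P σ.1))
        = min (I s₀) (rP P s₀)) := by
  exact ⟨fun _ _ c => possibility_of_cylinder_general P I c, fun _ => (inf_iSup_eq _ _).symm⟩
end

section
/- Let S be a finite nonempty set with N = |S|, P : S × S → [0,1], and a, b : S → [0,1]. For s ∈ S and n ∈ ℕ define PoU_n(s) := max_{0 ≤ j ≤ n} of [ sup over all finite sequences t₀ = s, t₁, …, t_j in S of min( min_{0 ≤ k < j} min( a(t_k), P(t_k, t_{k+1}) ), b(t_j), r_P(t_j) ) ]. Then for every n ≥ N and every s ∈ S, PoU_n(s) = PoU_N(s); consequently the unbounded quantity sup_{j ∈ ℕ} [ sup over t₀ = s, …, t_j of min( min_{k<j} min( a(t_k), P(t_k, t_{k+1}) ), b(t_j), r_P(t_j) ) ] equals PoU_N(s). -/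
/-- The sup over finite fragments `t₀ = s, …, t_j` of length `j` of
`min( min_{0≤k<j} min(a(t_k), P(t_k, t_{k+1})), b(t_j), r_P(t_j) )`. -/
noncomputable def untilFrag {S : Type*} (P : S → S → unitInterval)
    (a b : S → unitInterval) (j : ℕ) (s : S) : unitInterval :=
  ⨆ t : {t : Fin (j + 1) → S // t 0 = s},
    min (⨅ k : Fin j, min (a (t.1 k.castSucc)) (P (t.1 k.castSucc) (t.1 k.succ)))
      (min (b (t.1 (Fin.last j))) (rP P (t.1 (Fin.last j))))

/-- `PoU_n(s) = Po(s ⊨ Φ ⊔^{≤n} Ψ)`: the max over `0 ≤ j ≤ n` of `untilFrag`. -/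
noncomputable def PoU {S : Type*} (P : S → S → unitInterval)
    (a b : S → unitInterval) (n : ℕ) (s : S) : unitInterval :=
  ⨆ j : Fin (n + 1), untilFrag P a b j s

section Bottleneck

variable {α L : Type*}

theorem exists_relSeries_length_lt_of_not_injective {r : SetRel α α} (p : RelSeries r)
    (hp : ¬ Function.Injective p) :
    ∃ q : RelSeries r, q.head = p.head ∧ q.last = p.last ∧ q.length < p.length := by
  obtain ⟨i, j, hij, heq⟩ : ∃ i j, i < j ∧ p i = p j := by
    contrapose! hp
    exact Function.Injective.of_lt_imp_ne hp
  have hconnect : (p.take i).last = (p.drop j).head := by simpa using heq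
  refine ⟨(p.take i).smash (p.drop j) hconnect, by simp, by simp, ?_⟩
  simp only [RelSeries.smash_length, RelSeries.take_length, RelSeries.drop_length]
  omega

theorem exists_injective_relSeries {r : SetRel α α} (p : RelSeries r) :
    ∃ q : RelSeries r, q.head = p.head ∧ q.last = p.last ∧ Function.Injective q := by
  induction hn : p.length using Nat.strong_induction_on generalizing p with
  | _ n ih =>
    by_cases hp : Function.Injective p
    · exact ⟨p, rfl, rfl, hp⟩
    obtain ⟨p', hhead', hlast', hlt⟩ := exists_relSeries_length_lt_of_not_injective p hp
    obtain ⟨q, hhead, hlast, hq⟩ := ih p'.length (hn ▸ hlt) p' rfl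
    exact ⟨q, hhead.trans hhead', hlast.trans hlast', hq⟩

/-- The bottleneck value of a walk `t₀, …, tₙ` in a graph with edge weights `w`: the infimum of the
weights of its steps, which is `⊤` for a walk without steps. -/
def bottleneck [InfSet L] (w : α → α → L) {n : ℕ} (t : Fin (n + 1) → α) : L :=
  ⨅ k : Fin n, w (t k.castSucc) (t k.succ)

theorem exists_injective_bottleneck_le [CompleteLattice L] (w : α → α → L) {n : ℕ}
    (t : Fin (n + 1) → α) :
    ∃ (m : ℕ) (u : Fin (m + 1) → α), Function.Injective u ∧ u 0 = t 0 ∧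
      u (Fin.last m) = t (Fin.last n) ∧ bottleneck w t ≤ bottleneck w u := by
  let r : SetRel α α := {(x, y) | bottleneck w t ≤ w x y}
  let p : RelSeries r := ⟨n, t, fun k => iInf_le (fun k : Fin n => w (t k.castSucc) (t k.succ)) k⟩
  obtain ⟨q, hhead, hlast, hq⟩ := exists_injective_relSeries p
  exact ⟨q.length, q, hq, hhead, hlast, le_iInf q.step⟩

end Bottleneck

section Until

variable {S : Type*} (P : S → S → unitInterval) (a b : S → unitInterval)

/-- The possibility that the fragment `t` witnesses `Φ ⊔ Ψ`, with `||Φ|| = a` and `||Ψ|| = b`: the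
term of the supremum `untilFrag` at `t`. -/
noncomputable def fragVal {j : ℕ} (t : Fin (j + 1) → S) : unitInterval :=
  min (bottleneck (fun x y => min (a x) (P x y)) t)
    (min (b (t (Fin.last j))) (rP P (t (Fin.last j))))

theorem untilFrag_eq_iSup_fragVal (j : ℕ) (s : S) :
    untilFrag P a b j s = ⨆ t : {t : Fin (j + 1) → S // t 0 = s}, fragVal P a b t.1 :=
  rfl

theorem fragVal_le_untilFrag {j : ℕ} (t : Fin (j + 1) → S) :
    fragVal P a b t ≤ untilFrag P a b j (t 0) := by
  rw [untilFrag_eq_iSup_fragVal]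
  exact le_iSup (fun u : {u : Fin (j + 1) → S // u 0 = t 0} => fragVal P a b u.1) ⟨t, rfl⟩

theorem exists_injective_fragVal_le {j : ℕ} (t : Fin (j + 1) → S) :
    ∃ (m : ℕ) (u : Fin (m + 1) → S),
      Function.Injective u ∧ u 0 = t 0 ∧ fragVal P a b t ≤ fragVal P a b u := by
  obtain ⟨m, u, hu, hhead, hlast, hle⟩ :=
    exists_injective_bottleneck_le (fun x y => min (a x) (P x y)) t
  refine ⟨m, u, hu, hhead, ?_⟩
  rw [fragVal, fragVal, hlast]
  exact min_le_min_right _ hle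

theorem untilFrag_le_PoU {j n : ℕ} (hj : j ≤ n) (s : S) : untilFrag P a b j s ≤ PoU P a b n s :=
  le_iSup (fun i : Fin (n + 1) => untilFrag P a b i s) ⟨j, Nat.lt_succ_of_le hj⟩

theorem untilFrag_le_PoU_of_card_le [Fintype S] {n : ℕ} (hn : Fintype.card S ≤ n + 1) (j : ℕ)
    (s : S) : untilFrag P a b j s ≤ PoU P a b n s := by
  rw [untilFrag_eq_iSup_fragVal]
  refine iSup_le ?_
  rintro ⟨t, rfl⟩
  obtain ⟨m, u, hu, hhead, hle⟩ := exists_injective_fragVal_le P a b t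
  have hm : m ≤ n := by
    have hcard := Fintype.card_le_of_injective u hu
    rw [Fintype.card_fin] at hcard
    omega
  calc fragVal P a b t ≤ fragVal P a b u := hle
    _ ≤ untilFrag P a b m (t 0) := hhead ▸ fragVal_le_untilFrag P a b u
    _ ≤ PoU P a b n (t 0) := untilFrag_le_PoU P a b hm (t 0)

theorem iSup_untilFrag_eq_PoU [Fintype S] {n : ℕ} (hn : Fintype.card S ≤ n + 1) (s : S) :
    ⨆ j : ℕ, untilFrag P a b j s = PoU P a b n s :=
  le_antisymm (iSup_le fun j => untilFrag_le_PoU_of_card_le P a b hn j s)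
    (iSup_le fun j => le_iSup (fun i : ℕ => untilFrag P a b i s) j)

end Until

/-- The bounded-until possibilities stabilize at `N = |S|`: `PoU_n = PoU_N` for all
`n ≥ N`, and hence the unbounded until possibility equals `PoU_N`. -/
theorem PoU_stabilizes {S : Type*} [Fintype S] [Nonempty S]
    (P : S → S → unitInterval) (a b : S → unitInterval) :
    (∀ n : ℕ, Fintype.card S ≤ n → ∀ s : S, PoU P a b n s = PoU P a b (Fintype.card S) s) ∧
    (∀ s : S, (⨆ j : ℕ, untilFrag P a b j s) = PoU P a b (Fintype.card S) s) := by
  have heq {n : ℕ} (hn : Fintype.card S ≤ n) (s : S) :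
      ⨆ j : ℕ, untilFrag P a b j s = PoU P a b n s :=
    iSup_untilFrag_eq_PoU P a b (Nat.le_succ_of_le hn) s
  exact ⟨fun n hn s => (heq hn s).symm.trans (heq le_rfl s), heq le_rfl⟩
end

section
/- Let S be a finite nonempty set, P : S × S → [0,1], and a : S → [0,1]. Define A : S → [0,1] by A(s) := sup over all runs σ from s of min( val_P(σ), inf_{i ≥ 0} a(σ i) ). If Z : S → [0,1] satisfies Z(s) = min( a(s), max_{t ∈ S} min( P(s,t), Z(t), r_P(t) ) ) for every s ∈ S, then Z(s) ≤ A(s) for every s ∈ S; hence A is the greatest fixpoint of the operator f. -/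
/-- `A(s) = Po(s ⊨ □Φ)`: the sup over runs `σ` from `s` of
`min(val_P(σ), inf_{i≥0} a(σ i))`, where `a = ||Φ||`. -/
noncomputable def alwaysSem {S : Type*} (P : S → S → unitInterval)
    (a : S → unitInterval) (s : S) : unitInterval :=
  ⨆ σ : {σ : ℕ → S // σ 0 = s}, min (valP P σ.1) (⨅ i : ℕ, a (σ.1 i))

/-- The operator `f(Z)(s) = min( a(s), max_{t} min(P(s,t), Z(t), r_P(t)) )`. -/
noncomputable def fOp {S : Type*} [Fintype S] (P : S → S → unitInterval)
    (a : S → unitInterval) (Z : S → unitInterval) : S → unitInterval :=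
  fun s => min (a s) (⨆ t : S, min (P s t) (min (Z t) (rP P t)))

section Runs

variable {S : Type*}

theorem valP_le_apply (P : S → S → unitInterval) (σ : ℕ → S) (i : ℕ) :
    valP P σ ≤ P (σ i) (σ (i + 1)) :=
  iInf_le (fun i => P (σ i) (σ (i + 1))) i

theorem valP_le_valP_tail (P : S → S → unitInterval) (σ : ℕ → S) :
    valP P σ ≤ valP P (fun i => σ (i + 1)) :=
  le_iInf fun i => valP_le_apply P σ (i + 1)

theorem valP_le_rP (P : S → S → unitInterval) (σ : ℕ → S) : valP P σ ≤ rP P (σ 0) :=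
  le_iSup (fun τ : {τ : ℕ → S // τ 0 = σ 0} => valP P τ.1) ⟨σ, rfl⟩

theorem min_valP_iInf_le_alwaysSem (P : S → S → unitInterval) (a : S → unitInterval) (σ : ℕ → S) :
    min (valP P σ) (⨅ i, a (σ i)) ≤ alwaysSem P a (σ 0) :=
  le_iSup (fun τ : {τ : ℕ → S // τ 0 = σ 0} => min (valP P τ.1) (⨅ i, a (τ.1 i))) ⟨σ, rfl⟩

theorem exists_run_forall_lt {L : Type*} [CompleteLinearOrder L] {P : S → S → L} {Z : S → L}
    (hZ : ∀ s, Z s ≤ ⨆ t, min (P s t) (Z t)) {c : L} {s : S} (hs : c < Z s) :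
    ∃ σ : ℕ → S, σ 0 = s ∧ ∀ i, c < P (σ i) (σ (i + 1)) ∧ c < Z (σ i) := by
  have exists_succ (u : {u // c < Z u}) : ∃ v : {v // c < Z v}, c < P u v := by
    obtain ⟨v, hv⟩ := lt_iSup_iff.1 (u.2.trans_le (hZ u))
    obtain ⟨hPv, hZv⟩ := lt_min_iff.1 hv
    exact ⟨⟨v, hZv⟩, hPv⟩
  choose step hstep using exists_succ
  refine ⟨fun i => step^[i] ⟨s, hs⟩, rfl, fun i => ⟨?_, (step^[i] ⟨s, hs⟩).2⟩⟩
  simpa only [Function.iterate_succ_apply'] using hstep (step^[i] ⟨s, hs⟩)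

end Runs

section Operator

variable {S : Type*}

/-- The operator `f` of the paper on an arbitrary state space, as a monotone map so that the
Knaster–Tarski theorem applies to it. The maximum over the successors becomes a supremum, which on
an infinite state space need not be attained. For finite `S` it is definitionally `fOp P a`. -/
noncomputable def alwaysHom (P : S → S → unitInterval) (a : S → unitInterval) :
    (S → unitInterval) →o (S → unitInterval) where
  toFun Z s := min (a s) (⨆ t, min (P s t) (min (Z t) (rP P t)))
  monotone' _ _ hZW _ :=
    min_le_min_left _ (iSup_mono fun t => min_le_min_left _ (min_le_min_right _ (hZW t)))

variable (P : S → S → unitInterval) (a : S → unitInterval)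

theorem alwaysHom_apply_le_iSup_min (Z : S → unitInterval) (s : S) :
    alwaysHom P a Z s ≤ ⨆ t, min (P s t) (Z t) :=
  (min_le_right _ _).trans (iSup_mono fun _ => min_le_min_left _ (min_le_left _ _))

theorem le_alwaysSem_of_le_alwaysHom {Z : S → unitInterval} (hZ : Z ≤ alwaysHom P a Z) :
    Z ≤ alwaysSem P a := by
  intro s
  refine le_of_forall_lt_imp_le_of_dense fun c hc => ?_
  obtain ⟨σ, rfl, hσ⟩ :=
    exists_run_forall_lt (fun u => (hZ u).trans (alwaysHom_apply_le_iSup_min P a Z u)) hc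
  have hP : c ≤ valP P σ := le_iInf fun i => (hσ i).1.le
  have ha : c ≤ ⨅ i, a (σ i) :=
    le_iInf fun i => (hσ i).2.le.trans ((hZ (σ i)).trans (min_le_left _ _))
  exact (le_min hP ha).trans (min_valP_iInf_le_alwaysSem P a σ)

theorem alwaysSem_le_alwaysHom : alwaysSem P a ≤ alwaysHom P a (alwaysSem P a) := by
  intro s
  refine iSup_le ?_
  rintro ⟨σ, rfl⟩
  have tail_le_alwaysSem : min (valP P σ) (⨅ i, a (σ i)) ≤ alwaysSem P a (σ 1) :=
    (min_le_min (valP_le_valP_tail P σ) (le_iInf fun i => iInf_le _ (i + 1))).trans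
      (min_valP_iInf_le_alwaysSem P a fun i => σ (i + 1))
  have tail_le_rP : valP P σ ≤ rP P (σ 1) :=
    (valP_le_valP_tail P σ).trans (valP_le_rP P fun i => σ (i + 1))
  refine le_min ((min_le_right _ _).trans (iInf_le _ 0)) (le_iSup_of_le (σ 1) ?_)
  exact le_min ((min_le_left _ _).trans (valP_le_apply P σ 0))
    (le_min tail_le_alwaysSem ((min_le_left _ _).trans tail_le_rP))

theorem isGreatest_alwaysSem_le_alwaysHom :
    IsGreatest {Z | Z ≤ alwaysHom P a Z} (alwaysSem P a) :=
  ⟨alwaysSem_le_alwaysHom P a, fun _ => le_alwaysSem_of_le_alwaysHom P a⟩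

theorem gfp_alwaysHom : (alwaysHom P a).gfp = alwaysSem P a :=
  (alwaysHom P a).isGreatest_gfp_le.unique (isGreatest_alwaysSem_le_alwaysHom P a)

theorem alwaysSem_greatest_fixpoint_general :
    IsGreatest (Function.fixedPoints (alwaysHom P a)) (alwaysSem P a) :=
  gfp_alwaysHom P a ▸ (alwaysHom P a).isGreatest_gfp

end Operator

/-- Every fixpoint `Z` of `f` satisfies `Z ≤ A` pointwise; hence `A` is the greatest
fixpoint of `f`. -/
theorem alwaysSem_greatest_fixpoint {S : Type*} [Fintype S] [Nonempty S]
    (P : S → S → unitInterval) (a : S → unitInterval) :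
    (∀ Z : S → unitInterval, (∀ s : S, Z s = fOp P a Z s) → ∀ s : S, Z s ≤ alwaysSem P a s)
    ∧ IsGreatest {Z : S → unitInterval | fOp P a Z = Z} (alwaysSem P a) :=
  have isGreatest := alwaysSem_greatest_fixpoint_general P a
  ⟨fun _ hZ => isGreatest.2 (funext fun s => (hZ s).symm), isGreatest⟩
end
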